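/- For every constant ε > 0, with high probability G contains a perfect matching M such that | |M ∩ Q_i| − α_i n | ≤ εn for every color i ∈ [q]. -/

import Mathlib

open MeasureTheory Filter Finset Asymptotics

/-- Discrete measurable structure on edge states: `none` = non-edge, `some i` = edge of color `cᵢ`. -/
instance (q : ℕ) : MeasurableSpace (Option (Fin q)) := ⊤

/-- Distribution of the state of a single pair: non-edge with probability `1-p`,
an edge of color `cᵢ` with probability `αᵢ·p`. -/
noncomputable def colorM (q : ℕ) (α : Fin q → ℝ) (p : ℝ) : Measure (Option (Fin q)) :=
  ENNReal.ofReal (1 - p) • Measure.dirac none +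
    ∑ i : Fin q, ENNReal.ofReal (α i * p) • Measure.dirac (some i)

/-- The randomly colored random bipartite graph on parts `A = B = Fin n`:
independently, each pair `(a,b)` is a non-edge with probability `1-p` and an
edge of color `cᵢ` with probability `αᵢ·p`.  A sample is a function
`f : Fin n × Fin n → Option (Fin q)`. -/
noncomputable def graphM (n q : ℕ) (α : Fin q → ℝ) (p : ℝ) :
    Measure (Fin n × Fin n → Option (Fin q)) :=
  Measure.pi fun _ => colorM q α p

/-! A sample of the colored graph is a random graph `E`, given by independent edge indicators,
together with independent colors of all the pairs, independent of `E`. A bipartite graph without a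
perfect matching violates Hall's condition on one of its sides, and a smallest violation is so
constrained that the expected number of candidates is dominated by a geometric series with sum
`O(n * exp (-n * p)) = O(exp (-ω))`. If `E` does have a perfect matching, fix one by looking at `E`
only: its edges receive independent colors, and Chebyshev's inequality applies to each color count.
-/

open Classical in
/-- The neighborhood of a set `S` of left vertices in the bipartite graph with adjacency
relation `R`. -/
noncomputable def neighborFinset {A B : Type*} [Fintype B] (R : A → B → Prop) (S : Finset A) :
    Finset B :=
  {b | ∃ a ∈ S, R a b}

/-- Hall's condition `|S| ≤ |N(S)|`, for the sets `S` of fewer than `k` left vertices. -/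
def HallConditionBelow {A B : Type*} [Fintype B] (R : A → B → Prop) (k : ℕ) : Prop :=
  ∀ S : Finset A, #S < k → #S ≤ #(neighborFinset R S)

/-- The configuration left behind by a smallest violation `S` of Hall's condition, with `T = N(S)`:
the inequalities `|T| < |S|` and `|S| ≤ (n + 1) / 2` in their sharp form, and the fact that every
vertex of `T` has two neighbors in `S`, which pays for the choice of `T` in a union bound. -/
structure IsHallObstruction {A B : Type*} [Fintype B] (R : A → B → Prop)
    (S : Finset A) (T : Finset B) : Prop where
  card_left : #S = #T + 1
  two_mul_card_right_lt : 2 * #T < Fintype.card B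
  mem_right_of_rel : ∀ a ∈ S, ∀ b, R a b → b ∈ T
  exists_offDiag_rel : ∀ b ∈ T, ∃ x ∈ S.offDiag, R x.1 b ∧ R x.2 b

section HallObstruction

variable {A B : Type*} [Fintype B] {R : A → B → Prop} {S : Finset A}

lemma mem_neighborFinset {b : B} : b ∈ neighborFinset R S ↔ ∃ a ∈ S, R a b := by
  simp [neighborFinset]

lemma neighborFinset_mono {S' : Finset A} (h : S ⊆ S') :
    neighborFinset R S ⊆ neighborFinset R S' := fun b hb => by
  obtain ⟨a, ha, hab⟩ := mem_neighborFinset.1 hb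
  exact mem_neighborFinset.2 ⟨a, h ha, hab⟩

lemma HallConditionBelow.card_eq_of_card_neighborFinset_lt (h : HallConditionBelow R #S)
    (hS : #(neighborFinset R S) < #S) : #S = #(neighborFinset R S) + 1 := by
  classical
  obtain ⟨a, ha⟩ : S.Nonempty := card_pos.1 (by omega)
  have hle := card_le_card (neighborFinset_mono (R := R) (erase_subset a S))
  have hHall := h (S.erase a) (card_erase_lt_of_mem ha)
  have := card_erase_add_one ha
  omega

lemma HallConditionBelow.exists_offDiag_rel (h : HallConditionBelow R #S)
    (hS : #(neighborFinset R S) < #S) {b : B} (hb : b ∈ neighborFinset R S) :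
    ∃ x ∈ S.offDiag, R x.1 b ∧ R x.2 b := by
  classical
  obtain ⟨a, ha, hab⟩ := mem_neighborFinset.1 hb
  by_contra! hunique
  have hsub : neighborFinset R (S.erase a) ⊆ (neighborFinset R S).erase b := by
    refine subset_erase.2 ⟨neighborFinset_mono (erase_subset a S), fun hb' => ?_⟩
    obtain ⟨a', ha', ha'b⟩ := mem_neighborFinset.1 hb'
    obtain ⟨hne, ha'⟩ := mem_erase.1 ha'
    exact hunique (a', a) (mem_offDiag.2 ⟨ha', ha, hne⟩) ha'b hab
  have hHall := (h (S.erase a) (card_erase_lt_of_mem ha)).trans (card_le_card hsub)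
  have := card_erase_add_one ha
  have := card_erase_add_one hb
  omega

/-- If `S` is a violation, so is the complement of `N(S)` on the other side: its neighborhood
misses `S`. -/
lemma HallConditionBelow.two_mul_card_neighborFinset_lt [Fintype A]
    (hAB : Fintype.card A = Fintype.card B) (h : HallConditionBelow (flip R) #S)
    (hS : #S = #(neighborFinset R S) + 1) :
    2 * #(neighborFinset R S) < Fintype.card B := by
  classical
  by_contra! hlt
  have hsub : neighborFinset (flip R) (neighborFinset R S)ᶜ ⊆ Sᶜ := fun a ha => by
    obtain ⟨b, hb, hab⟩ := mem_neighborFinset.1 ha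
    exact mem_compl.2 fun haS => mem_compl.1 hb (mem_neighborFinset.2 ⟨a, haS, hab⟩)
  have hle := card_le_card hsub
  have := card_add_card_compl S
  have := card_add_card_compl (neighborFinset R S)
  have hHall := h (neighborFinset R S)ᶜ (by omega)
  omega

lemma isHallObstruction_neighborFinset [Fintype A]
    (hAB : Fintype.card A = Fintype.card B)
    (h : HallConditionBelow R #S) (h' : HallConditionBelow (flip R) #S)
    (hS : #(neighborFinset R S) < #S) : IsHallObstruction R S (neighborFinset R S) where
  card_left := h.card_eq_of_card_neighborFinset_lt hS
  two_mul_card_right_lt :=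
    h'.two_mul_card_neighborFinset_lt hAB (h.card_eq_of_card_neighborFinset_lt hS)
  mem_right_of_rel a ha _ hab := mem_neighborFinset.2 ⟨a, ha, hab⟩
  exists_offDiag_rel _ hb := h.exists_offDiag_rel hS hb

lemma HallConditionBelow.exists_violation {k : ℕ} (h : HallConditionBelow R k)
    (h' : ¬ HallConditionBelow R (k + 1)) :
    ∃ S : Finset A, #S = k ∧ #(neighborFinset R S) < #S := by
  simp only [HallConditionBelow, not_forall, not_le] at h'
  obtain ⟨S, hk, hS⟩ := h'
  exact ⟨S, by by_contra hne; exact (h S (by omega)).not_gt hS, hS⟩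

lemma exists_equiv_of_forall_hallConditionBelow [Fintype A]
    (hAB : Fintype.card A = Fintype.card B) (h : ∀ k, HallConditionBelow R k) :
    ∃ σ : A ≃ B, ∀ a, R a (σ a) := by
  classical
  obtain ⟨f, hf, hR⟩ := (Fintype.all_card_le_filter_rel_iff_exists_injective R).1 fun S => by
    simpa only [neighborFinset] using h (#S + 1) S (Nat.lt_succ_self _)
  exact ⟨.ofBijective f ((Fintype.bijective_iff_injective_and_card f).2 ⟨hf, hAB⟩), hR⟩

theorem exists_isHallObstruction_or_flip [Fintype A]
    (hAB : Fintype.card A = Fintype.card B) (hno : ¬ ∃ σ : A ≃ B, ∀ a, R a (σ a)) :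
    (∃ S T, IsHallObstruction R S T) ∨ ∃ T S, IsHallObstruction (flip R) T S := by
  obtain ⟨k₀, hk₀⟩ : ∃ k, ¬ (HallConditionBelow R k ∧ HallConditionBelow (flip R) k) := by
    by_contra! h
    exact hno (exists_equiv_of_forall_hallConditionBelow hAB fun k => (h k).1)
  obtain ⟨k, hk, hk'⟩ := Nat.exists_not_and_succ_of_not_zero_of_exists
    (p := fun k => ¬ (HallConditionBelow R k ∧ HallConditionBelow (flip R) k))
    (by simp [HallConditionBelow]) ⟨k₀, hk₀⟩
  obtain ⟨hR, hflip⟩ := not_not.1 hk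
  rcases not_and_or.1 hk' with hfail | hfail
  · obtain ⟨S, rfl, hS⟩ := hR.exists_violation hfail
    exact .inl ⟨S, _, isHallObstruction_neighborFinset hAB hR hflip hS⟩
  · obtain ⟨T, rfl, hT⟩ := hflip.exists_violation hfail
    exact .inr ⟨T, _, isHallObstruction_neighborFinset hAB.symm hflip hR hT⟩

end HallObstruction

/-- The law of independent Bernoulli(`p`) edge indicators, one for each index. -/
noncomputable abbrev bernoulliPi (ι : Type*) [Fintype ι] (p : unitInterval) : Measure (ι → Bool) :=
  Measure.pi fun _ => ProbabilityTheory.bernoulliMeasure true false p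

/-- An upper bound for the expected number of Hall obstructions `(S, T)` with `|T| = j` in the
random bipartite graph with parts of size `n` and edge probability `p`: the factors count the sets
`S`, the sets `T` and the ordered pairs of neighbors in `S` chosen for the vertices of `T`, and
give the probability that the `2j` chosen edges are present and all edges from `S` to `Tᶜ` absent.
-/
noncomputable def expectedObstructions (n : ℕ) (p : ℝ) (j : ℕ) : ℝ :=
  n.choose (j + 1) * (n.choose j * (((j + 1) * j : ℕ) ^ j *
    ((1 - p) ^ ((j + 1) * (n - j)) * p ^ (2 * j))))

section FirstMoment

lemma measureReal_bernoulliPi_cylinder {ι : Type*} [Fintype ι] (p : unitInterval) {F G : Finset ι}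
    (hFG : Disjoint F G) :
    (bernoulliPi ι p).real {E | (∀ i ∈ F, E i = false) ∧ ∀ i ∈ G, E i = true} =
      (1 - p) ^ #F * p ^ #G := by
  classical
  have hbox : {E : ι → Bool | (∀ i ∈ F, E i = false) ∧ ∀ i ∈ G, E i = true} =
      Set.univ.pi fun i => {b | (i ∈ F → b = false) ∧ (i ∈ G → b = true)} := by
    ext E
    simp only [Set.mem_ofPred_eq, Set.mem_pi, Set.mem_univ, true_implies, forall_and]
  have hfactor (i : ι) : (ProbabilityTheory.bernoulliMeasure true false p).real
      {b | (i ∈ F → b = false) ∧ (i ∈ G → b = true)} =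
        (if i ∈ F then 1 - (p : ℝ) else 1) * (if i ∈ G then (p : ℝ) else 1) := by
    have hnot := fun hF : i ∈ F => disjoint_left.1 hFG hF
    rw [ProbabilityTheory.bernoulliMeasure_real_apply p .of_discrete]
    by_cases hF : i ∈ F <;> by_cases hG : i ∈ G <;> simp_all
  rw [hbox, measureReal_def, Measure.pi_pi, ENNReal.toReal_prod]
  simp only [← measureReal_def, hfactor, prod_mul_distrib, prod_ite_mem, univ_inter, prod_const]

variable {A B : Type*}

open Classical in
/-- The edges joining each `b ∈ T` to both entries of the pair `h b`. -/
noncomputable def cherryEdges {T : Finset B} (h : T → A × A) : Finset (A × B) :=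
  univ.image fun x : T × Bool => (cond x.2 (h x.1).1 (h x.1).2, (x.1 : B))

lemma mem_cherryEdges {T : Finset B} {h : T → A × A} {e : A × B} :
    e ∈ cherryEdges h ↔ ∃ b : T, ((h b).1, (b : B)) = e ∨ ((h b).2, (b : B)) = e := by
  simp only [cherryEdges, mem_image, mem_univ, true_and, Prod.exists, Bool.exists_bool, cond_true,
    cond_false, or_comm]

lemma card_cherryEdges {T : Finset B} {h : T → A × A} (hne : ∀ b, (h b).1 ≠ (h b).2) :
    #(cherryEdges h) = 2 * #T := by
  classical
  rw [cherryEdges, card_image_of_injective, card_univ, Fintype.card_prod, Fintype.card_bool,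
    Fintype.card_coe, mul_comm]
  rintro ⟨b, i⟩ ⟨b', i'⟩ heq
  obtain ⟨hA, hB⟩ := Prod.mk.inj heq
  obtain rfl : b = b' := Subtype.ext hB
  cases i <;> cases i' <;> first | rfl | exact absurd hA (hne b) | exact absurd hA.symm (hne b)

lemma disjoint_product_compl_cherryEdges [Fintype B] [DecidableEq B] (S : Finset A) {T : Finset B}
    (h : T → A × A) : Disjoint (S ×ˢ Tᶜ) (cherryEdges h) :=
  disjoint_left.2 fun e he he' => by
    obtain ⟨b, rfl | rfl⟩ := mem_cherryEdges.1 he' <;>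
    exact mem_compl.1 (mem_product.1 he).2 b.2

lemma setOf_isHallObstruction_subset [Fintype B] [DecidableEq B] (S : Finset A) (T : Finset B) :
    {E : A × B → Bool | IsHallObstruction (fun a b => E (a, b) = true) S T} ⊆
      ⋃ h ∈ Fintype.piFinset fun _ : T => S.offDiag,
        {E | (∀ e ∈ S ×ˢ Tᶜ, E e = false) ∧ ∀ e ∈ cherryEdges h, E e = true} := by
  intro E hE
  choose h hS hadj using hE.exists_offDiag_rel
  refine Set.mem_biUnion (x := fun b : T => h b b.2)
    (Fintype.mem_piFinset.2 fun b => hS b b.2) ⟨fun e he => ?_, fun e he => ?_⟩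
  · obtain ⟨heS, heT⟩ := mem_product.1 he
    exact Bool.eq_false_iff.2 fun hEe =>
      mem_compl.1 heT (hE.mem_right_of_rel e.1 heS e.2 hEe)
  · obtain ⟨b, rfl | rfl⟩ := mem_cherryEdges.1 he
    · exact (hadj b b.2).1
    · exact (hadj b b.2).2

variable [Fintype A] [Fintype B]

lemma measureReal_isHallObstruction_le (p : unitInterval) (S : Finset A) (T : Finset B) :
    (bernoulliPi (A × B) p).real
        {E | IsHallObstruction (fun a b => E (a, b) = true) S T} ≤
      #S.offDiag ^ #T * ((1 - p) ^ (#S * (Fintype.card B - #T)) * p ^ (2 * #T)) := by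
  classical
  refine (measureReal_mono (setOf_isHallObstruction_subset S T) (measure_ne_top _ _)).trans <|
    (measureReal_biUnion_finset_le _ _).trans ?_
  calc
    _ ≤ #(Fintype.piFinset fun _ : T => S.offDiag) •
        ((1 - p : ℝ) ^ (#S * (Fintype.card B - #T)) * p ^ (2 * #T)) := by
      refine sum_le_card_nsmul _ _ _ fun h hh => ?_
      have hne (b : T) : (h b).1 ≠ (h b).2 :=
        (mem_offDiag.1 (Fintype.mem_piFinset.1 hh b)).2.2
      rw [measureReal_bernoulliPi_cylinder p (disjoint_product_compl_cherryEdges S h),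
        card_product, card_compl, card_cherryEdges hne]
    _ = _ := by
      rw [Fintype.card_piFinset, prod_const, nsmul_eq_mul, card_univ, Fintype.card_coe,
        Nat.cast_pow]

lemma measureReal_exists_isHallObstruction_le {n : ℕ} (hA : Fintype.card A = n)
    (hB : Fintype.card B = n) (p : unitInterval) :
    (bernoulliPi (A × B) p).real
        {E | ∃ S T, IsHallObstruction (fun a b => E (a, b) = true) S T} ≤
      ∑ j ∈ range ((n + 1) / 2), expectedObstructions n p j := by
  classical
  have hsub : {E : A × B → Bool | ∃ S T, IsHallObstruction (fun a b => E (a, b) = true) S T} ⊆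
      ⋃ j ∈ range ((n + 1) / 2), ⋃ S ∈ powersetCard (j + 1) univ, ⋃ T ∈ powersetCard j univ,
        {E | IsHallObstruction (fun a b => E (a, b) = true) S T} := by
    rintro E ⟨S, T, hST⟩
    have hlt := hST.two_mul_card_right_lt
    simp only [Set.mem_iUnion, mem_range, mem_powersetCard_univ]
    exact ⟨#T, by omega, S, hST.card_left, T, rfl, hST⟩
  refine (measureReal_mono hsub (measure_ne_top _ _)).trans <|
    (measureReal_biUnion_finset_le _ _).trans <| sum_le_sum fun j _ =>
      (measureReal_biUnion_finset_le _ _).trans ?_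
  rw [expectedObstructions, ← hA, ← card_univ, ← card_powersetCard (j + 1), ← nsmul_eq_mul]
  refine sum_le_card_nsmul _ _ _ fun S hS => (measureReal_biUnion_finset_le _ _).trans ?_
  rw [card_univ, hA, ← hB, ← card_univ, ← card_powersetCard j, ← nsmul_eq_mul]
  refine sum_le_card_nsmul _ _ _ fun T hT => (measureReal_isHallObstruction_le p S T).trans_eq ?_
  rw [offDiag_card, mem_powersetCard_univ.1 hS, mem_powersetCard_univ.1 hT, ← Nat.mul_sub_one,
    Nat.add_sub_cancel, card_univ]

end FirstMoment

/-- The ratio of the geometric series dominating the expected number of Hall obstructions in a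
random bipartite graph of average degree `d`. -/
noncomputable def obstructionRatio (d : ℝ) : ℝ :=
  Real.exp 3 * (d ^ 2 * Real.exp (-(d / 2)))

section Estimates

variable {n : ℕ}

lemma choose_mul_pow_self_le (n k : ℕ) :
    (n.choose k : ℝ) * (k : ℝ) ^ k ≤ (Real.exp 1 * n) ^ k := by
  calc (n.choose k : ℝ) * (k : ℝ) ^ k
      ≤ (n : ℝ) ^ k / k.factorial * (k : ℝ) ^ k := by
        gcongr
        exact Nat.choose_le_pow_div k n
    _ = (k : ℝ) ^ k / k.factorial * n ^ k := by ring
    _ ≤ Real.exp k * n ^ k := by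
        gcongr
        exact Real.pow_div_factorial_le_exp k k.cast_nonneg k
    _ = (Real.exp 1 * n) ^ k := by rw [mul_pow, Real.exp_one_pow]

lemma one_sub_pow_le_exp (p : unitInterval) {j : ℕ} (hj : 2 * j < n) :
    (1 - p : ℝ) ^ ((j + 1) * (n - j)) ≤
      Real.exp (-(n * p)) * (Real.exp 1 * Real.exp (-(n * p / 2))) ^ j := by
  have hexponent : n * (p : ℝ) + j * (n * p / 2 - 1) ≤ (j + 1) * (n - j) * p := by
    have hjn : (2 * j + 1 : ℝ) ≤ n := by exact_mod_cast hj
    have := mul_nonneg (mul_nonneg p.2.1 j.cast_nonneg) (sub_nonneg.2 hjn)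
    have := mul_nonneg (j.cast_nonneg (α := ℝ)) (sub_nonneg.2 p.2.2)
    linarith
  calc (1 - p : ℝ) ^ ((j + 1) * (n - j))
      ≤ Real.exp (-p) ^ ((j + 1) * (n - j)) :=
        pow_le_pow_left₀ (sub_nonneg.2 p.2.2) (Real.one_sub_le_exp_neg _) _
    _ = Real.exp (-((j + 1) * (n - j) * p)) := by
        rw [← Real.exp_nat_mul]
        push_cast [show j ≤ n by omega]
        ring_nf
    _ ≤ Real.exp (-(n * p) + j * (1 + -(n * p / 2))) := Real.exp_le_exp.2 (by linarith)
    _ = _ := by rw [Real.exp_add, Real.exp_nat_mul, Real.exp_add]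

lemma expectedObstructions_le (p : unitInterval) {j : ℕ} (hj : 2 * j < n) :
    expectedObstructions n p j ≤
      Real.exp 1 * (n * Real.exp (-(n * p))) * obstructionRatio (n * p) ^ j := by
  have hp := p.2.1
  have hS : (n.choose (j + 1) : ℝ) * (j + 1 : ℝ) ^ j ≤ (Real.exp 1 * n) ^ (j + 1) := by
    refine le_trans ?_ (choose_mul_pow_self_le n (j + 1))
    push_cast
    gcongr
    · linarith [j.cast_nonneg (α := ℝ)]
    · omega
  calc expectedObstructions n p j
      = (n.choose (j + 1) * (j + 1 : ℝ) ^ j) * (n.choose j * (j : ℝ) ^ j) *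
          ((1 - p) ^ ((j + 1) * (n - j)) * p ^ (2 * j)) := by
        rw [expectedObstructions]
        push_cast
        rw [mul_pow]
        ring
    _ ≤ (Real.exp 1 * n) ^ (j + 1) * (Real.exp 1 * n) ^ j *
          (Real.exp (-(n * p)) * (Real.exp 1 * Real.exp (-(n * p / 2))) ^ j * p ^ (2 * j)) := by
        gcongr
        · have := sub_nonneg.2 p.2.2
          positivity
        · exact choose_mul_pow_self_le n j
        · exact one_sub_pow_le_exp p hj
    _ = Real.exp 1 * (n * Real.exp (-(n * p))) * obstructionRatio (n * p) ^ j := by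
        have hexp : Real.exp 3 = Real.exp 1 ^ 3 := by rw [Real.exp_one_pow]; norm_num
        rw [obstructionRatio, hexp]
        ring

lemma sum_expectedObstructions_le (p : unitInterval) (hr : obstructionRatio (n * p) ≤ 1 / 2) :
    ∑ j ∈ range ((n + 1) / 2), expectedObstructions n p j ≤
      2 * (Real.exp 1 * (n * Real.exp (-(n * p)))) := by
  have hr0 : 0 ≤ obstructionRatio (n * p) := by
    rw [obstructionRatio]
    positivity
  calc ∑ j ∈ range ((n + 1) / 2), expectedObstructions n p j
      ≤ ∑ j ∈ range ((n + 1) / 2), Real.exp 1 * (n * Real.exp (-(n * p))) * (1 / 2) ^ j := by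
        refine sum_le_sum fun j hj => ?_
        have hjn : 2 * j < n := by rw [mem_range] at hj; omega
        refine (expectedObstructions_le p hjn).trans ?_
        gcongr
    _ = Real.exp 1 * (n * Real.exp (-(n * p))) * ∑ j ∈ range ((n + 1) / 2), (1 / 2) ^ j := by
        rw [mul_sum]
    _ ≤ Real.exp 1 * (n * Real.exp (-(n * p))) * 2 := by
        gcongr
        exact sum_geometric_two_le _
    _ = 2 * (Real.exp 1 * (n * Real.exp (-(n * p)))) := mul_comm _ _

lemma tendsto_obstructionRatio_atTop : Tendsto obstructionRatio atTop (nhds 0) := by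
  have h := (Real.tendsto_pow_mul_exp_neg_atTop_nhds_zero 2).comp
    (tendsto_id.atTop_div_const (zero_lt_two (α := ℝ)))
  rw [← mul_zero (Real.exp 3 * 4)]
  refine (h.const_mul (Real.exp 3 * 4)).congr fun d => ?_
  simp only [Function.comp_apply, id, obstructionRatio]
  ring

lemma measureReal_not_exists_perfectMatching_le {A B : Type*} [Fintype A] [Fintype B]
    (hA : Fintype.card A = n) (hB : Fintype.card B = n) (p : unitInterval)
    (hr : obstructionRatio (n * p) ≤ 1 / 2) :
    (bernoulliPi (A × B) p).real {E | ¬ ∃ σ : A ≃ B, ∀ a, E (a, σ a) = true} ≤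
      4 * (Real.exp 1 * (n * Real.exp (-(n * p)))) := by
  have hcover : {E : A × B → Bool | ¬ ∃ σ : A ≃ B, ∀ a, E (a, σ a) = true} ⊆
      {E | ∃ S T, IsHallObstruction (fun a b => E (a, b) = true) S T} ∪
        MeasurableEquiv.piCongrLeft (fun _ => Bool) (Equiv.prodComm A B) ⁻¹'
          {E | ∃ T S, IsHallObstruction (fun b a => E (b, a) = true) T S} :=
    fun E hE => exists_isHallObstruction_or_flip (hA.trans hB.symm) hE
  have hswap := measurePreserving_piCongrLeft
    (fun _ : B × A => ProbabilityTheory.bernoulliMeasure true false p) (Equiv.prodComm A B)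
  calc (bernoulliPi (A × B) p).real {E | ¬ ∃ σ : A ≃ B, ∀ a, E (a, σ a) = true}
      ≤ (bernoulliPi (A × B) p).real
            {E | ∃ S T, IsHallObstruction (fun a b => E (a, b) = true) S T} +
          (bernoulliPi (B × A) p).real
            {E | ∃ T S, IsHallObstruction (fun b a => E (b, a) = true) T S} := by
        rw [← hswap.measureReal_preimage (Set.toFinite _).measurableSet.nullMeasurableSet]
        exact (measureReal_mono hcover (measure_ne_top _ _)).trans (measureReal_union_le _ _)
    _ ≤ 2 * (Real.exp 1 * (n * Real.exp (-(n * p)))) +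
          2 * (Real.exp 1 * (n * Real.exp (-(n * p)))) := by
        gcongr
        · exact (measureReal_exists_isHallObstruction_le hA hB p).trans
            (sum_expectedObstructions_le p hr)
        · exact (measureReal_exists_isHallObstruction_le hB hA p).trans
            (sum_expectedObstructions_le p hr)
    _ = 4 * (Real.exp 1 * (n * Real.exp (-(n * p)))) := by ring

end Estimates

section Concentration

variable {ι κ C : Type*} [Fintype ι] [Fintype κ] [MeasurableSpace C] {ν : Measure C}
  [IsProbabilityMeasure ν] {s : Set C}

lemma memLp_indicator_one_comp_eval (hs : MeasurableSet s) (i : ι) :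
    MemLp (fun x : ι → C => s.indicator (1 : C → ℝ) (x i)) 2 (Measure.pi fun _ : ι => ν) :=
  (memLp_indicator_const 2 hs (1 : ℝ) (.inr (measure_ne_top ν s))).comp_measurePreserving
    (measurePreserving_eval (fun _ : ι => ν) i)

lemma integral_indicator_one_comp_eval (hs : MeasurableSet s) (i : ι) :
    ∫ x : ι → C, s.indicator (1 : C → ℝ) (x i) ∂(Measure.pi fun _ : ι => ν) = ν.real s := by
  rw [← integral_indicator_one hs]
  exact integral_comp_eval (measurable_one.indicator hs).aestronglyMeasurable

lemma variance_indicator_one_comp_eval_le (hs : MeasurableSet s) (i : ι) :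
    ProbabilityTheory.variance (fun x : ι → C => s.indicator (1 : C → ℝ) (x i))
      (Measure.pi fun _ : ι => ν) ≤ 1 / 4 := by
  refine (ProbabilityTheory.variance_le_sq_of_bounded (a := 0) (b := 1)
    (ae_of_all _ fun x => ?_) (memLp_indicator_one_comp_eval hs i).aemeasurable).trans_eq
      (by norm_num)
  exact ⟨Set.indicator_nonneg (fun _ _ => zero_le_one) _,
    Set.indicator_le_self' (fun _ _ => zero_le_one) _⟩

lemma variance_sum_indicator_one_comp_le (hs : MeasurableSet s) {g : κ → ι}
    (hg : Function.Injective g) :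
    ProbabilityTheory.variance (∑ k, fun x : ι → C => s.indicator (1 : C → ℝ) (x (g k)))
      (Measure.pi fun _ : ι => ν) ≤ Fintype.card κ / 4 := by
  have hindep := (ProbabilityTheory.iIndepFun_pi (μ := fun _ : ι => ν)
    (X := fun _ => s.indicator (1 : C → ℝ))
    fun _ => (measurable_one.indicator hs).aemeasurable).precomp hg
  rw [ProbabilityTheory.IndepFun.variance_sum
    (fun k _ => memLp_indicator_one_comp_eval hs (g k)) fun k _ l _ hkl => hindep.indepFun hkl]
  refine (sum_le_card_nsmul _ _ (1 / 4) fun k _ =>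
    variance_indicator_one_comp_eval_le hs (g k)).trans_eq ?_
  rw [card_univ, nsmul_eq_mul, mul_one_div]

lemma measureReal_le_abs_card_sub_le [DecidablePred (· ∈ s)] (hs : MeasurableSet s) {g : κ → ι}
    (hg : Function.Injective g) {c : ℝ} (hc : 0 < c) :
    (Measure.pi fun _ : ι => ν).real
        {x | c ≤ |(#{k | x (g k) ∈ s} : ℝ) - ν.real s * Fintype.card κ|} ≤
      Fintype.card κ / 4 / c ^ 2 := by
  have hL2 (k : κ) := memLp_indicator_one_comp_eval (ν := ν) hs (g k)
  have hcount (x : ι → C) : (#{k | x (g k) ∈ s} : ℝ) =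
      (∑ k, fun x : ι → C => s.indicator (1 : C → ℝ) (x (g k))) x := by
    simp only [Finset.sum_apply, Set.indicator_apply, Pi.one_apply, sum_boole]
  have hmean : ν.real s * Fintype.card κ =
      ∫ x, (∑ k, fun x : ι → C => s.indicator (1 : C → ℝ) (x (g k))) x
        ∂(Measure.pi fun _ : ι => ν) := by
    simp only [Finset.sum_apply]
    rw [integral_finsetSum _ fun k _ => (hL2 k).integrable one_le_two]
    simp only [integral_indicator_one_comp_eval hs, sum_const, card_univ, nsmul_eq_mul, mul_comm]
  simp only [hcount, hmean]
  refine (ENNReal.toReal_le_of_le_ofReal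
    (div_nonneg (ProbabilityTheory.variance_nonneg _ _) (sq_nonneg c))
    (ProbabilityTheory.meas_ge_le_variance_div_sq
      (memLp_finsetSum' _ fun k _ => hL2 k) hc)).trans ?_
  gcongr
  exact variance_sum_indicator_one_comp_le hs hg

end Concentration

lemma measureReal_prod_le_add {X Y : Type*} [MeasurableSpace X] [MeasurableSpace Y]
    {μ : Measure X} {ν : Measure Y} [IsProbabilityMeasure μ] [IsProbabilityMeasure ν]
    {s : Set (X × Y)} {t : Set X} (hs : MeasurableSet s) (ht : MeasurableSet t) {δ : ℝ}
    (hδ : ∀ x ∉ t, ν.real (Prod.mk x ⁻¹' s) ≤ δ) (hδ0 : 0 ≤ δ) :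
    (μ.prod ν).real s ≤ μ.real t + δ := by
  have hfiber (x : X) : ν (Prod.mk x ⁻¹' s) ≤ t.indicator 1 x + ENNReal.ofReal δ := by
    by_cases hx : x ∈ t
    · rw [Set.indicator_of_mem hx]
      exact prob_le_one.trans le_self_add
    · rw [← ofReal_measureReal]
      exact (ENNReal.ofReal_le_ofReal (hδ x hx)).trans le_add_self
  refine ENNReal.toReal_le_of_le_ofReal (by positivity) ?_
  calc (μ.prod ν) s = ∫⁻ x, ν (Prod.mk x ⁻¹' s) ∂μ := Measure.prod_apply hs
    _ ≤ ∫⁻ x, t.indicator 1 x + ENNReal.ofReal δ ∂μ := lintegral_mono hfiber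
    _ = ENNReal.ofReal (μ.real t + δ) := by
      rw [lintegral_add_right _ measurable_const, lintegral_indicator_one ht, lintegral_const,
        measure_univ, mul_one, ENNReal.ofReal_add measureReal_nonneg hδ0, ofReal_measureReal]

section Coupling

variable {q : ℕ} {α : Fin q → ℝ}

instance : DiscreteMeasurableSpace (Option (Fin q)) := ⟨fun _ => trivial⟩

/-- The law on the colors giving color `i` probability `α i`. -/
noncomputable def colorLaw (α : Fin q → ℝ) : Measure (Fin q) :=
  ∑ i, ENNReal.ofReal (α i) • Measure.dirac i

/-- The state of a pair which is an edge or not according to `x.1`, and which is given the color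
`x.2` in the first case. -/
def coloredEdge (x : Bool × Fin q) : Option (Fin q) :=
  if x.1 then some x.2 else none

/-- The event of `near_proportional_matching`: some perfect matching of the colored graph `f`
contains `α i * n` edges of each color `i`, up to an error `ε * n`. -/
def HasNearProportionalMatching {n : ℕ} (α : Fin q → ℝ) (ε : ℝ)
    (f : Fin n × Fin n → Option (Fin q)) : Prop :=
  ∃ σ : Equiv.Perm (Fin n), (∀ a, f (a, σ a) ≠ none) ∧
    ∀ i, |((univ.filter fun a => f (a, σ a) = some i).card : ℝ) - α i * n| ≤ ε * n

lemma colorLaw_singleton (α : Fin q → ℝ) (i : Fin q) :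
    colorLaw α {i} = ENNReal.ofReal (α i) := by
  simp [colorLaw, Measure.coe_finsetSum, Finset.sum_apply, Set.indicator_apply]

lemma isProbabilityMeasure_colorLaw (hα : α ∈ stdSimplex ℝ (Fin q)) :
    IsProbabilityMeasure (colorLaw α) where
  measure_univ := by
    simp only [colorLaw, Measure.coe_finsetSum, Finset.sum_apply, Measure.coe_smul, Pi.smul_apply,
      measure_univ, smul_eq_mul, mul_one]
    rw [← ENNReal.ofReal_sum_of_nonneg fun i _ => hα.1 i, hα.2, ENNReal.ofReal_one]

lemma colorM_eq_map_coloredEdge (hα : α ∈ stdSimplex ℝ (Fin q)) (p : unitInterval) :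
    colorM q α p =
      ((ProbabilityTheory.bernoulliMeasure true false p).prod (colorLaw α)).map coloredEdge := by
  have := isProbabilityMeasure_colorLaw hα
  refine Measure.ext_of_singleton fun a => ?_
  rw [Measure.map_apply .of_discrete .of_discrete]
  cases a with
  | none =>
    have hpre : coloredEdge ⁻¹' {none} = {false} ×ˢ (Set.univ : Set (Fin q)) := by
      ext ⟨b, c⟩; cases b <;> simp [coloredEdge]
    rw [hpre, Measure.prod_prod, measure_univ]
    simpa [colorM] using
      ENNReal.ofReal_coe_nnreal (p := unitInterval.toNNReal (unitInterval.symm p))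
  | some i =>
    have hpre : coloredEdge ⁻¹' {some i} = {true} ×ˢ {i} := by
      ext ⟨b, c⟩; cases b <;> simp [coloredEdge]
    rw [hpre, Measure.prod_prod, colorLaw_singleton, mul_comm]
    have hp : ENNReal.ofReal p = unitInterval.toNNReal p :=
      ENNReal.ofReal_coe_nnreal (p := unitInterval.toNNReal p)
    simp [colorM, Set.indicator_apply, ENNReal.ofReal_mul (hα.1 i), hp]

lemma graphM_eq_map_coloredEdge (hα : α ∈ stdSimplex ℝ (Fin q)) (n : ℕ) (p : unitInterval) :
    graphM n q α p = ((bernoulliPi (Fin n × Fin n) p).prod (Measure.pi fun _ => colorLaw α)).map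
      fun x e => coloredEdge (x.1 e, x.2 e) := by
  have := isProbabilityMeasure_colorLaw hα
  have hprod := measurePreserving_arrowProdEquivProdArrow Bool (Fin q) (Fin n × Fin n)
    (fun _ => ProbabilityTheory.bernoulliMeasure true false p) (fun _ => colorLaw α)
  have : IsProbabilityMeasure (((ProbabilityTheory.bernoulliMeasure true false p).prod
      (colorLaw α)).map coloredEdge) :=
    Measure.isProbabilityMeasure_map Measurable.of_discrete.aemeasurable
  rw [graphM, colorM_eq_map_coloredEdge hα, ← hprod.map_eq,
    Measure.map_map .of_discrete hprod.measurable,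
    ← Measure.pi_map_pi fun _ => Measurable.of_discrete.aemeasurable]
  rfl

lemma isProbabilityMeasure_graphM (hα : α ∈ stdSimplex ℝ (Fin q)) (n : ℕ) (p : unitInterval) :
    IsProbabilityMeasure (graphM n q α p) := by
  have := isProbabilityMeasure_colorLaw hα
  rw [graphM_eq_map_coloredEdge hα]
  exact Measure.isProbabilityMeasure_map Measurable.of_discrete.aemeasurable

lemma measureReal_not_hasNearProportionalMatching_le (hα : α ∈ stdSimplex ℝ (Fin q)) {n : ℕ}
    {ε : ℝ} (hεn : 0 < ε * n) {E : Fin n × Fin n → Bool}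
    (hE : ∃ σ : Equiv.Perm (Fin n), ∀ a, E (a, σ a) = true) :
    (Measure.pi fun _ : Fin n × Fin n => colorLaw α).real
        {c | ¬ HasNearProportionalMatching α ε fun e => coloredEdge (E e, c e)} ≤
      q * (n / 4 / (ε * n) ^ 2) := by
  have := isProbabilityMeasure_colorLaw hα
  obtain ⟨σ, hσ⟩ := hE
  have hsub : {c : Fin n × Fin n → Fin q | ¬ HasNearProportionalMatching α ε fun e =>
      coloredEdge (E e, c e)} ⊆
      ⋃ i ∈ (univ : Finset (Fin q)),
        {c | ε * n ≤ |(#{a | c (a, σ a) ∈ ({i} : Set (Fin q))} : ℝ) -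
          (colorLaw α).real {i} * Fintype.card (Fin n)|} := by
    intro c hc
    contrapose! hc
    simp only [Set.mem_iUnion, Set.mem_ofPred_eq, Set.mem_singleton_iff, mem_univ, exists_const,
      not_exists, not_le, measureReal_def, colorLaw_singleton, ENNReal.toReal_ofReal (hα.1 _),
      Fintype.card_fin] at hc
    refine not_not.2 ⟨σ, fun a => ?_, fun i => ?_⟩
    · simp [coloredEdge, hσ]
    · simpa [coloredEdge, hσ] using (hc i).le
  have hinj : Function.Injective fun a => (a, σ a) := fun a b h => (Prod.mk.inj h).1
  refine (measureReal_mono hsub (measure_ne_top _ _)).trans <|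
    (measureReal_biUnion_finset_le _ _).trans <|
    (sum_le_card_nsmul _ _ _ fun i _ =>
      measureReal_le_abs_card_sub_le (.singleton i) hinj hεn).trans_eq ?_
  rw [card_univ, Fintype.card_fin, Fintype.card_fin, nsmul_eq_mul]

lemma graphM_real_not_hasNearProportionalMatching_le (hα : α ∈ stdSimplex ℝ (Fin q)) {n : ℕ}
    {ε : ℝ} (hεn : 0 < ε * n) (p : unitInterval) (hr : obstructionRatio (n * p) ≤ 1 / 2) :
    (graphM n q α p).real {f | ¬ HasNearProportionalMatching α ε f} ≤
      4 * (Real.exp 1 * (n * Real.exp (-(n * p)))) + q * (n / 4 / (ε * n) ^ 2) := by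
  have := isProbabilityMeasure_colorLaw hα
  rw [graphM_eq_map_coloredEdge hα, map_measureReal_apply .of_discrete .of_discrete]
  refine (measureReal_prod_le_add
    (t := {E : Fin n × Fin n → Bool | ¬ ∃ σ : Equiv.Perm (Fin n), ∀ a, E (a, σ a) = true})
    .of_discrete .of_discrete
    (fun E hE => measureReal_not_hasNearProportionalMatching_le hα hεn (not_not.1 hE))
    (by positivity)).trans ?_
  gcongr
  exact measureReal_not_exists_perfectMatching_le (Fintype.card_fin n) (Fintype.card_fin n) p hr

lemma le_graphM_hasNearProportionalMatching (hα : α ∈ stdSimplex ℝ (Fin q)) {n : ℕ} {ε : ℝ}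
    (hεn : 0 < ε * n) (p : unitInterval) (hr : obstructionRatio (n * p) ≤ 1 / 2) :
    ENNReal.ofReal
        (1 - (4 * (Real.exp 1 * (n * Real.exp (-(n * p)))) + q * (n / 4 / (ε * n) ^ 2))) ≤
      graphM n q α p {f | HasNearProportionalMatching α ε f} := by
  have := isProbabilityMeasure_graphM hα n p
  have hfail := graphM_real_not_hasNearProportionalMatching_le hα hεn p hr
  have hcompl := probReal_add_probReal_compl (μ := graphM n q α p)
    (MeasurableSet.of_discrete (s := {f | HasNearProportionalMatching α ε f}))
  rw [Set.compl_ofPred] at hcompl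
  rw [← ofReal_measureReal]
  exact ENNReal.ofReal_le_ofReal (by linarith)

end Coupling

section Limit

lemma tendsto_error_bound_atTop {q : ℕ} {ε : ℝ} (hε : 0 < ε) {p : ℕ → ℝ}
    (hp : Tendsto (fun n => n * p n - Real.log n) atTop atTop) :
    Tendsto (fun n : ℕ => 4 * (Real.exp 1 * (n * Real.exp (-(n * p n)))) +
      q * (n / 4 / (ε * n) ^ 2)) atTop (nhds 0) := by
  have hisolated : Tendsto (fun n : ℕ => n * Real.exp (-(n * p n))) atTop (nhds 0) := by
    refine (Real.tendsto_exp_neg_atTop_nhds_zero.comp hp).congr' ?_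
    filter_upwards [eventually_gt_atTop 0] with n hn
    rw [Function.comp_apply, neg_sub, sub_eq_add_neg, Real.exp_add,
      Real.exp_log (Nat.cast_pos.2 hn)]
  have hcheb : Tendsto (fun n : ℕ => (n / 4 / (ε * n) ^ 2 : ℝ)) atTop (nhds 0) := by
    refine (tendsto_const_div_atTop_nhds_zero_nat (1 / 4 / ε ^ 2)).congr' ?_
    filter_upwards [eventually_gt_atTop 0] with n hn
    field_simp
  simpa using ((hisolated.const_mul (Real.exp 1)).const_mul 4).add (hcheb.const_mul (q : ℝ))

lemma tendsto_natCast_mul_atTop {p : ℕ → ℝ}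
    (hp : Tendsto (fun n => n * p n - Real.log n) atTop atTop) :
    Tendsto (fun n => n * p n) atTop atTop :=
  tendsto_atTop_mono (fun n => sub_le_self _ (Real.log_natCast_nonneg n)) hp

lemma eventually_mem_unitInterval {p : ℕ → ℝ} (hp1 : ∀ᶠ n in atTop, p n ≤ 1)
    (hp : Tendsto (fun n => n * p n) atTop atTop) : ∀ᶠ n in atTop, p n ∈ unitInterval := by
  filter_upwards [hp1, hp.eventually_ge_atTop 0, eventually_gt_atTop 0] with n h1 h0 hn
  exact ⟨nonneg_of_mul_nonneg_right h0 (Nat.cast_pos.2 hn), h1⟩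

theorem near_proportional_matching_general (q : ℕ) (α : Fin q → ℝ) (hα : α ∈ stdSimplex ℝ (Fin q))
    (ε : ℝ) (hε : 0 < ε) (p : ℕ → ℝ) (hp1 : ∀ᶠ n in atTop, p n ≤ 1)
    (hp : Tendsto (fun n => n * p n - Real.log n) atTop atTop) :
    Tendsto (fun n => graphM n q α (p n) {f | HasNearProportionalMatching α ε f})
      atTop (nhds 1) := by
  have hdegree := tendsto_natCast_mul_atTop hp
  have hlim := ENNReal.tendsto_ofReal ((tendsto_error_bound_atTop (q := q) hε hp).const_sub 1)
  rw [sub_zero, ENNReal.ofReal_one] at hlim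
  have hunit := eventually_mem_unitInterval hp1 hdegree
  refine tendsto_of_tendsto_of_tendsto_of_le_of_le' hlim tendsto_const_nhds ?_ ?_
  · filter_upwards [hunit, eventually_gt_atTop 0,
      (tendsto_obstructionRatio_atTop.comp hdegree).eventually_le_const one_half_pos]
      with n hpn hn hr
    exact le_graphM_hasNearProportionalMatching hα (mul_pos hε (Nat.cast_pos.2 hn)) ⟨p n, hpn⟩ hr
  · filter_upwards [hunit] with n hpn
    have := isProbabilityMeasure_graphM hα n ⟨p n, hpn⟩
    exact prob_le_one

lemma eventually_log_add_div_le_one {w : ℕ → ℝ} (hwo : w =o[atTop] fun n => Real.log n) :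
    ∀ᶠ n : ℕ in atTop, (Real.log n + w n) / n ≤ 1 := by
  have hlog : (fun n : ℕ => Real.log n) =o[atTop] fun n : ℕ => (n : ℝ) :=
    Real.isLittleO_log_id_atTop.comp_tendsto tendsto_natCast_atTop_atTop
  filter_upwards [(hlog.add (hwo.trans hlog)).def one_pos] with n hn
  refine div_le_one_of_le₀ ((le_abs_self _).trans ?_) n.cast_nonneg
  simpa using hn

lemma tendsto_natCast_mul_log_add_div_sub_log {w : ℕ → ℝ} (hw : Tendsto w atTop atTop) :
    Tendsto (fun n : ℕ => n * ((Real.log n + w n) / n) - Real.log n) atTop atTop := by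
  refine hw.congr' ?_
  filter_upwards [eventually_ne_atTop 0] with n hn
  rw [mul_div_cancel₀ _ (Nat.cast_ne_zero.2 hn), add_sub_cancel_left]

end Limit

/-- for every `ε > 0`, w.h.p. there is a perfect matching `M` with
`||M ∩ Qᵢ| − αᵢ n| ≤ εn` for every color `i`. -/
theorem near_proportional_matching (q : ℕ) (hq : 1 ≤ q) (α : Fin q → ℝ)
    (hα : ∀ i, 0 < α i) (hsum : ∑ i, α i = 1)
    (ε : ℝ) (hε : 0 < ε)
    (w : ℕ → ℝ) (hw : Tendsto w atTop atTop)
    (hwo : w =o[atTop] fun n => Real.log n) :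
    Tendsto (fun n =>
      graphM n q α ((Real.log n + w n) / n)
        {f | ∃ σ : Equiv.Perm (Fin n), (∀ a, f (a, σ a) ≠ none) ∧
          ∀ i, |((univ.filter fun a => f (a, σ a) = some i).card : ℝ) - α i * n| ≤ ε * n})
      atTop (nhds 1) :=
  near_proportional_matching_general q α ⟨fun i => (hα i).le, hsum⟩ ε hε _
    (eventually_log_add_div_le_one hwo) (tendsto_natCast_mul_log_add_div_sub_log hw)
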